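/- For every real z with 0 ≤ z < 1 one has √z · ∑_{n=0}^∞ (n!)²(1/2)ₙ/((3/2)ₙ)² · (−z)ⁿ/n! = −Li₂(1/(√z+√(z+1))) + Li₂(−1/(√z+√(z+1))) + log(√z+√(z+1))·log((√z+√(z+1)−1)/(√z+√(z+1)+1)) + π²/4. -/

import Mathlib

noncomputable def poch (a : ℝ) (n : ℕ) : ℝ := ∏ i ∈ Finset.range n, (a + i)

/-- Dilogarithm `Li₂(x) = ∑_{k ≥ 1} x^k / k²`. -/
noncomputable def Li2 (x : ℝ) : ℝ := ∑' k : ℕ, x ^ (k + 1) / ((k : ℝ) + 1)^2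

/-! Put `√z = sinh t`, so that `√z + √(z + 1) = exp t`. Since `(1)ₙ = n!` and
`(3/2)ₙ = (2n + 1) (1/2)ₙ`, the left-hand side is `∑ aₙ sinh t ^ (2n + 1) / (2n + 1)`, where
`∑ aₙ x ^ (2n + 1)` solves `(1 + x²) S' + x S = 1` and hence equals `arsinh x / √(1 + x²)`. The
`t`-derivative of the left-hand side is therefore `t / sinh t`. The right-hand side has the same
derivative for `t > 0`, because the logarithms `∓log (1 ∓ exp (-t))` coming from the dilogarithms
cancel `log (tanh (t / 2))`. Both sides are continuous at `t = 0`, where `Li₂ 1 = π² / 6` and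
`Li₂ (-1) = -π² / 12` account for the constant. -/

open Real Set Topology

section BoundedCoefficients

variable {𝕜 : Type*} [RCLike 𝕜] {c : ℕ → 𝕜} {d : ℕ → ℕ} {C : ℝ} {x : 𝕜}

lemma summable_mul_pow_of_bounded (hd : d.Injective) (hc : ∀ n, ‖c n‖ ≤ C) (hx : ‖x‖ < 1) :
    Summable fun n ↦ c n * x ^ d n := by
  have hgeom := (summable_geometric_of_lt_one (norm_nonneg x) hx).comp_injective hd
  refine .of_norm_bounded (hgeom.mul_left C) fun n ↦ ?_
  rw [norm_mul, norm_pow]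
  exact mul_le_mul_of_nonneg_right (hc n) (by positivity)

lemma summable_natCast_mul_pow_pred {r : ℝ} (hr₀ : 0 ≤ r) (hr₁ : r < 1) :
    Summable fun n : ℕ ↦ (n : ℝ) * r ^ (n - 1) := by
  have hr : ‖r‖ < 1 := by rwa [Real.norm_of_nonneg hr₀]
  rw [← summable_nat_add_iff 1]
  refine ((summable_pow_mul_geometric_of_norm_lt_one 1 hr).add
    (summable_geometric_of_norm_lt_one hr)).congr fun n ↦ ?_
  rw [pow_one, Nat.add_sub_cancel, Nat.cast_succ]
  ring

lemma summable_deriv_mul_pow_of_bounded (hd : d.Injective) (hc : ∀ n, ‖c n‖ ≤ C) (hx : ‖x‖ < 1) :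
    Summable fun n ↦ c n * (d n * x ^ (d n - 1)) := by
  have hsum := (summable_natCast_mul_pow_pred (norm_nonneg x) hx).comp_injective hd
  refine .of_norm_bounded (hsum.mul_left C) fun n ↦ ?_
  rw [norm_mul, norm_mul, norm_pow, RCLike.norm_natCast]
  exact mul_le_mul_of_nonneg_right (hc n) (by positivity)

lemma hasDerivAt_tsum_mul_pow_of_bounded (hd : d.Injective) (hc : ∀ n, ‖c n‖ ≤ C)
    (hx : ‖x‖ < 1) :
    HasDerivAt (fun y ↦ ∑' n, c n * y ^ d n) (∑' n, c n * (d n * x ^ (d n - 1))) x := by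
  obtain ⟨r, hxr, hr⟩ := exists_between hx
  have hr₀ : 0 ≤ r := (norm_nonneg x).trans hxr.le
  have hsum := (summable_natCast_mul_pow_pred hr₀ hr).comp_injective hd
  refine hasDerivAt_tsum_of_isPreconnected (hsum.mul_left C) Metric.isOpen_ball
    (convex_ball (0 : 𝕜) r).isPreconnected (fun n y _ ↦ (hasDerivAt_pow (d n) y).const_mul (c n))
    (fun n y hy ↦ ?_) (mem_ball_zero_iff.2 hxr) (summable_mul_pow_of_bounded hd hc hx)
    (mem_ball_zero_iff.2 hxr)
  have hC : 0 ≤ C := (norm_nonneg _).trans (hc n)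
  rw [norm_mul, norm_mul, norm_pow, RCLike.norm_natCast]
  have hyr : ‖y‖ ≤ r := (mem_ball_zero_iff.1 hy).le
  simp only [Function.comp_apply]
  gcongr
  exact hc n

end BoundedCoefficients

lemma sub_eq_sub_of_hasDerivAt_Ioo {f g f' : ℝ → ℝ} {a b : ℝ} (hab : a ≤ b)
    (hf : ContinuousOn f (Icc a b)) (hg : ContinuousOn g (Icc a b))
    (hf' : ∀ x ∈ Ioo a b, HasDerivAt f (f' x) x) (hg' : ∀ x ∈ Ioo a b, HasDerivAt g (f' x) x) :
    f b - f a = g b - g a := by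
  rcases hab.eq_or_lt with rfl | hab
  · simp
  obtain ⟨x, -, hslope⟩ := exists_hasDerivAt_eq_slope (fun y ↦ f y - g y) _ hab (hf.sub hg)
    fun x hx ↦ (hf' x hx).sub (hg' x hx)
  rw [sub_self, eq_div_iff (sub_pos.2 hab).ne'] at hslope
  linarith

lemma continuousAt_sub_mul_log {f : ℝ → ℝ} {f' a : ℝ} (hf : HasDerivAt f f' a) (hfa : f a = 0)
    (hf' : f' ≠ 0) : ContinuousAt (fun x ↦ (x - a) * log (f x)) a := by
  have hslope : ContinuousAt (dslope f a) a := continuousAt_dslope_same.2 hf.differentiableAt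
  have hne : dslope f a a ≠ 0 := by rwa [dslope_same, hf.deriv]
  have hfactor : (fun x ↦ (x - a) * log (f x)) =ᶠ[𝓝 a]
      fun x ↦ (x - a) * log (x - a) + (x - a) * log (dslope f a x) := by
    filter_upwards [hslope.eventually_ne hne] with x hx
    have hfx : f x = (x - a) * dslope f a x := by
      rw [← smul_eq_mul, sub_smul_dslope, hfa, sub_zero]
    rcases eq_or_ne x a with rfl | hxa
    · simp
    · rw [hfx, Real.log_mul (sub_ne_zero.2 hxa) hx, mul_add]
  have hid : ContinuousAt (fun x : ℝ ↦ x - a) a := by fun_prop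
  exact ((Real.continuous_mul_log.continuousAt.comp hid).add
    (hid.mul (hslope.log hne))).congr hfactor.symm

lemma tanh_half_eq (t : ℝ) : tanh (t / 2) = (exp t - 1) / (exp t + 1) := by
  have hsq : exp t = exp (t / 2) ^ 2 := by rw [← Real.exp_nat_mul]; ring_nf
  rw [Real.tanh_eq, Real.exp_neg, hsq]
  field_simp

lemma hasDerivAt_tanh_half (t : ℝ) :
    HasDerivAt (fun s ↦ tanh (s / 2)) (1 / (2 * cosh (t / 2) ^ 2)) t := by
  have hhalf : HasDerivAt (fun s : ℝ ↦ s / 2) (1 / 2) t := (hasDerivAt_id t).div_const 2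
  have hcosh : cosh (t / 2) ≠ 0 := (Real.cosh_pos _).ne'
  simp only [Real.tanh_eq_sinh_div_cosh]
  refine (hhalf.sinh.div hhalf.cosh hcosh).congr_deriv ?_
  field_simp
  linear_combination Real.cosh_sq_sub_sinh_sq (t / 2)

lemma tanh_half_ne_zero {t : ℝ} (ht : t ≠ 0) : tanh (t / 2) ≠ 0 := by
  rw [Real.tanh_eq_sinh_div_cosh]
  exact div_ne_zero (Real.sinh_ne_zero.2 (by simpa using ht)) (Real.cosh_pos _).ne'

lemma hasDerivAt_log_tanh_half {t : ℝ} (ht : t ≠ 0) :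
    HasDerivAt (fun s ↦ log (tanh (s / 2))) (1 / sinh t) t := by
  refine ((hasDerivAt_tanh_half t).log (tanh_half_ne_zero ht)).congr_deriv ?_
  have hcosh := (Real.cosh_pos (t / 2)).ne'
  rw [Real.tanh_eq_sinh_div_cosh, show sinh t = sinh (2 * (t / 2)) by ring_nf,
    Real.sinh_two_mul]
  field_simp

lemma continuous_mul_log_tanh_half : Continuous fun t ↦ t * log (tanh (t / 2)) := by
  refine continuous_iff_continuousAt.2 fun t ↦ ?_
  rcases eq_or_ne t 0 with rfl | ht
  · simpa using continuousAt_sub_mul_log (hasDerivAt_tanh_half 0) (by simp) (by simp)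
  · exact continuousAt_id.mul (hasDerivAt_log_tanh_half ht).continuousAt

lemma summable_one_div_add_one_sq : Summable fun k : ℕ ↦ 1 / ((k : ℝ) + 1) ^ 2 := by
  simpa using (summable_nat_add_iff 1).2 hasSum_zeta_two.summable

lemma norm_pow_div_sq_le {x : ℝ} (hx : |x| ≤ 1) (k : ℕ) :
    ‖x ^ (k + 1) / ((k : ℝ) + 1) ^ 2‖ ≤ 1 / ((k : ℝ) + 1) ^ 2 := by
  rw [norm_div, norm_pow, Real.norm_eq_abs, Real.norm_of_nonneg (by positivity)]
  gcongr
  exact pow_le_one₀ (abs_nonneg x) hx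

lemma hasSum_Li2 {x : ℝ} (hx : |x| ≤ 1) :
    HasSum (fun k : ℕ ↦ x ^ (k + 1) / ((k : ℝ) + 1) ^ 2) (Li2 x) :=
  (Summable.of_norm_bounded summable_one_div_add_one_sq (norm_pow_div_sq_le hx)).hasSum

lemma continuousOn_Li2 : ContinuousOn Li2 (Icc (-1) 1) :=
  continuousOn_tsum (fun k ↦ by fun_prop) summable_one_div_add_one_sq
    fun k _ hx ↦ norm_pow_div_sq_le (abs_le.2 hx) k

lemma Li2_add_Li2_neg {x : ℝ} (hx : |x| ≤ 1) : Li2 x + Li2 (-x) = Li2 (x ^ 2) / 2 := by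
  let f (k : ℕ) : ℝ := x ^ (k + 1) / ((k : ℝ) + 1) ^ 2 + (-x) ^ (k + 1) / ((k : ℝ) + 1) ^ 2
  have hf : HasSum f (Li2 x + Li2 (-x)) := (hasSum_Li2 hx).add (hasSum_Li2 (by rwa [abs_neg]))
  have heven : HasSum (fun k ↦ f (2 * k)) 0 := by
    have hcancel (k : ℕ) : f (2 * k) = 0 := by
      simp only [f, (odd_two_mul_add_one k).neg_pow]
      ring
    simpa only [hcancel] using hasSum_zero
  have hodd : HasSum (fun k ↦ f (2 * k + 1)) (Li2 (x ^ 2) / 2) := by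
    have hx2 : |x ^ 2| ≤ 1 := by rw [abs_pow]; exact pow_le_one₀ (abs_nonneg x) hx
    have hterm (k : ℕ) : f (2 * k + 1) = (x ^ 2) ^ (k + 1) / ((k : ℝ) + 1) ^ 2 / 2 := by
      simp only [f, show 2 * k + 1 + 1 = 2 * (k + 1) by ring, (even_two_mul (k + 1)).neg_pow,
        pow_mul]
      push_cast
      field_simp
      ring
    simpa only [hterm] using (hasSum_Li2 hx2).div_const 2
  simpa using hf.unique (heven.even_add_odd hodd)

lemma Li2_one : Li2 1 = π ^ 2 / 6 := by
  have hzeta := hasSum_zeta_two.summable.tsum_eq_zero_add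
  rw [hasSum_zeta_two.tsum_eq] at hzeta
  simp [Li2, hzeta]

lemma Li2_neg_one : Li2 (-1) = -(π ^ 2 / 12) := by
  have hdup := Li2_add_Li2_neg (x := 1) (by simp)
  rw [one_pow, Li2_one] at hdup
  linarith

lemma hasDerivAt_Li2 {x : ℝ} (hx : |x| < 1) (hx₀ : x ≠ 0) :
    HasDerivAt Li2 (-log (1 - x) / x) x := by
  have hc (k : ℕ) : ‖1 / ((k : ℝ) + 1) ^ 2‖ ≤ 1 := by
    rw [Real.norm_of_nonneg (by positivity)]
    exact div_le_one_of_le₀ (one_le_pow₀ (by simp)) (by positivity)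
  have hderiv := hasDerivAt_tsum_mul_pow_of_bounded (add_left_injective 1) hc hx
  simp only [one_div_mul_eq_div] at hderiv
  refine hderiv.congr_deriv ?_
  rw [eq_div_iff hx₀, ← (Real.hasSum_pow_div_log_of_abs_lt_one hx).tsum_eq, ← tsum_mul_right]
  refine tsum_congr fun k ↦ ?_
  rw [Nat.add_sub_cancel, Nat.cast_succ, pow_succ x k]
  field_simp

lemma hasDerivAt_Li2_mul_exp_neg {c t : ℝ} (hc : c ≠ 0) (h : |c * exp (-t)| < 1) :
    HasDerivAt (fun s ↦ Li2 (c * exp (-s))) (log (1 - c * exp (-t))) t := by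
  have hinner : HasDerivAt (fun s ↦ c * exp (-s)) (-(c * exp (-t))) t := by
    simpa using (hasDerivAt_neg t).exp.const_mul c
  have hne : c * exp (-t) ≠ 0 := mul_ne_zero hc (Real.exp_pos _).ne'
  refine ((hasDerivAt_Li2 h hne).comp t hinner).congr_deriv ?_
  field_simp

lemma continuousOn_Li2_mul_exp_neg {c : ℝ} (hc : |c| ≤ 1) :
    ContinuousOn (fun t ↦ Li2 (c * exp (-t))) (Ici 0) := by
  refine continuousOn_Li2.comp (by fun_prop) fun t ht ↦ abs_le.1 ?_
  rw [abs_mul, Real.abs_exp]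
  exact mul_le_one₀ hc (Real.exp_pos _).le (Real.exp_le_one_iff.2 (neg_nonpos.2 ht))

lemma log_tanh_half {t : ℝ} (ht : t ≠ 0) :
    log (tanh (t / 2)) =
      log (1 - exp (-t)) - log (1 + exp (-t)) := by
  have hnum : 1 - exp (-t) ≠ 0 := by
    rwa [sub_ne_zero, ne_comm, Ne, Real.exp_eq_one_iff, neg_eq_zero]
  rw [← Real.log_div hnum (by positivity), tanh_half_eq, Real.exp_neg]
  congr 1
  field_simp

/-- The dilogarithmic primitive of `t / sinh t` on `t > 0`; at `t = arsinh √z` it is the closed form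
of the identity, up to the constant `π² / 4`. -/
noncomputable def divSinhPrimitive (t : ℝ) : ℝ :=
  -Li2 (exp (-t)) + Li2 (-exp (-t)) + t * log (tanh (t / 2))

lemma divSinhPrimitive_zero : divSinhPrimitive 0 = -(π ^ 2 / 4) := by
  simp only [divSinhPrimitive, neg_zero, Real.exp_zero, Li2_one, Li2_neg_one]
  ring

lemma continuousOn_divSinhPrimitive : ContinuousOn divSinhPrimitive (Ici 0) := by
  have hpos := continuousOn_Li2_mul_exp_neg (c := 1) (by simp)
  have hneg := continuousOn_Li2_mul_exp_neg (c := -1) (by simp)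
  simp only [one_mul, neg_one_mul] at hpos hneg
  exact (hpos.neg.add hneg).add continuous_mul_log_tanh_half.continuousOn

lemma hasDerivAt_divSinhPrimitive {t : ℝ} (ht : 0 < t) :
    HasDerivAt divSinhPrimitive (t / sinh t) t := by
  have hexp : |exp (-t)| < 1 := by simpa using ht
  have hpos := hasDerivAt_Li2_mul_exp_neg (c := 1) one_ne_zero (by rwa [one_mul])
  have hneg := hasDerivAt_Li2_mul_exp_neg (c := -1) (by norm_num) (by rwa [neg_one_mul, abs_neg])
  simp only [one_mul, neg_one_mul, sub_neg_eq_add] at hpos hneg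
  refine ((hpos.neg.add hneg).add
    ((hasDerivAt_id t).mul (hasDerivAt_log_tanh_half ht.ne'))).congr_deriv ?_
  rw [log_tanh_half ht.ne', id]
  ring

lemma poch_pos {a : ℝ} (ha : 0 < a) (n : ℕ) : 0 < poch a n :=
  Finset.prod_pos fun _ _ ↦ by positivity

lemma poch_le_poch {a b : ℝ} (ha : 0 ≤ a) (hab : a ≤ b) (n : ℕ) : poch a n ≤ poch b n :=
  Finset.prod_le_prod (fun _ _ ↦ by positivity) fun _ _ ↦ by gcongr

lemma poch_succ (a : ℝ) (n : ℕ) : poch a (n + 1) = poch a n * (a + n) :=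
  Finset.prod_range_succ _ _

lemma poch_succ' (a : ℝ) (n : ℕ) : poch a (n + 1) = a * poch (a + 1) n := by
  simp only [poch, Finset.prod_range_succ', Nat.cast_zero, Nat.cast_succ, add_zero, add_assoc,
    add_comm (1 : ℝ), mul_comm a]

lemma poch_one (n : ℕ) : poch 1 n = n.factorial := by
  simp [poch, ← Finset.prod_range_add_one_eq_factorial, add_comm]

lemma poch_three_halves (n : ℕ) : poch (3 / 2) n = (2 * n + 1) * poch (1 / 2) n := by
  have h := (poch_succ' (1 / 2) n).symm.trans (poch_succ (1 / 2) n)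
  rw [show (3 / 2 : ℝ) = 1 / 2 + 1 by norm_num]
  linear_combination 2 * h

/-- The coefficient of `x ^ (2 * n + 1)` in the power series of `arsinh x / √(1 + x ^ 2)`. -/
noncomputable def arsinhDivCoeff (n : ℕ) : ℝ := (-1) ^ n * n.factorial / poch (3 / 2) n

lemma arsinhDivCoeff_zero : arsinhDivCoeff 0 = 1 := by simp [arsinhDivCoeff, poch]

lemma norm_arsinhDivCoeff_le_one (n : ℕ) : ‖arsinhDivCoeff n‖ ≤ 1 := by
  have hpoch := poch_pos (a := 3 / 2) (by norm_num) n
  rw [arsinhDivCoeff, norm_div, norm_mul, norm_pow, norm_neg, norm_one, one_pow, one_mul,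
    Real.norm_of_nonneg hpoch.le, Real.norm_natCast, ← poch_one, div_le_one hpoch]
  exact poch_le_poch zero_le_one (by norm_num) n

lemma arsinhDivCoeff_succ (n : ℕ) :
    (2 * n + 3) * arsinhDivCoeff (n + 1) = -((2 * n + 2) * arsinhDivCoeff n) := by
  have hpoch := (poch_pos (a := 3 / 2) (by norm_num) n).ne'
  have : (3 / 2 + n : ℝ) ≠ 0 := by positivity
  simp only [arsinhDivCoeff, poch_succ, Nat.factorial_succ, pow_succ]
  push_cast
  field_simp
  ring

lemma injective_two_mul_add_one : Function.Injective fun n : ℕ ↦ 2 * n + 1 :=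
  (add_left_injective 1).comp (mul_right_injective₀ two_ne_zero)

lemma tsum_arsinhDivCoeff_ode {x : ℝ} (hx : |x| < 1) :
    (1 + x ^ 2) * (∑' n : ℕ, arsinhDivCoeff n * ((2 * n + 1) * x ^ (2 * n)))
      + x * ∑' n, arsinhDivCoeff n * x ^ (2 * n + 1) = 1 := by
  have hS := summable_mul_pow_of_bounded injective_two_mul_add_one norm_arsinhDivCoeff_le_one hx
  have hS' := summable_deriv_mul_pow_of_bounded injective_two_mul_add_one
    norm_arsinhDivCoeff_le_one hx
  simp only [Nat.add_sub_cancel] at hS'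
  push_cast at hS'
  have hshift : ∑' n : ℕ, arsinhDivCoeff (n + 1) * ((2 * (n + 1 : ℕ) + 1) * x ^ (2 * (n + 1))) =
      -(x ^ 2 * (∑' n : ℕ, arsinhDivCoeff n * ((2 * n + 1) * x ^ (2 * n)))
        + x * ∑' n, arsinhDivCoeff n * x ^ (2 * n + 1)) := by
    rw [← tsum_mul_left, ← tsum_mul_left, ← (hS'.mul_left _).tsum_add (hS.mul_left _), ← tsum_neg]
    refine tsum_congr fun n ↦ ?_
    push_cast
    linear_combination x ^ (2 * n + 2) * arsinhDivCoeff_succ n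
  have hhead := hS'.tsum_eq_zero_add
  rw [hshift, arsinhDivCoeff_zero] at hhead
  linear_combination hhead

lemma hasDerivAt_tsum_arsinhDivCoeff {x : ℝ} (hx : |x| < 1) :
    HasDerivAt (fun y ↦ ∑' n, arsinhDivCoeff n * y ^ (2 * n + 1))
      ((1 - x * ∑' n, arsinhDivCoeff n * x ^ (2 * n + 1)) / (1 + x ^ 2)) x := by
  refine (hasDerivAt_tsum_mul_pow_of_bounded injective_two_mul_add_one
    norm_arsinhDivCoeff_le_one hx).congr_deriv ?_
  rw [eq_div_iff (by positivity), eq_sub_iff_add_eq, mul_comm _ (1 + x ^ 2)]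
  simpa only [Nat.add_sub_cancel, Nat.cast_add, Nat.cast_mul, Nat.cast_ofNat, Nat.cast_one]
    using tsum_arsinhDivCoeff_ode hx

lemma hasDerivAt_sqrt_one_add_sq (x : ℝ) :
    HasDerivAt (fun y ↦ √(1 + y ^ 2)) (x / √(1 + x ^ 2)) x := by
  refine (((hasDerivAt_pow 2 x).const_add 1).sqrt (by positivity)).congr_deriv ?_
  field_simp
  norm_num

lemma tsum_arsinhDivCoeff_mul_pow {x : ℝ} (hx : |x| < 1) :
    ∑' n, arsinhDivCoeff n * x ^ (2 * n + 1) = arsinh x / √(1 + x ^ 2) := by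
  set S : ℝ → ℝ := fun y ↦ ∑' n, arsinhDivCoeff n * y ^ (2 * n + 1)
  have hderiv : ∀ y ∈ Ioo (-1 : ℝ) 1,
      HasDerivAt (fun y ↦ S y * √(1 + y ^ 2)) (√(1 + y ^ 2))⁻¹ y := by
    intro y hy
    have hS : HasDerivAt S ((1 - y * S y) / (1 + y ^ 2)) y :=
      hasDerivAt_tsum_arsinhDivCoeff (abs_lt.2 hy)
    refine (hS.mul (hasDerivAt_sqrt_one_add_sq y)).congr_deriv ?_
    have hroot_sq : √(1 + y ^ 2) ^ 2 = 1 + y ^ 2 := Real.sq_sqrt (by positivity)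
    field_simp
    rw [hroot_sq]
    ring
  have heq : EqOn (fun y ↦ S y * √(1 + y ^ 2)) arsinh (Ioo (-1) 1) :=
    isOpen_Ioo.eqOn_of_deriv_eq isPreconnected_Ioo
      (fun y hy ↦ (hderiv y hy).differentiableAt.differentiableWithinAt)
      Real.differentiable_arsinh.differentiableOn
      (fun y hy ↦ (hderiv y hy).deriv.trans (Real.hasDerivAt_arsinh y).deriv.symm)
      (x := 0) (by simp) (by simp [S])
  exact (eq_div_iff (by positivity)).2 (heq (abs_lt.1 hx))

/-- The termwise integral `∫₀ˣ arsinh u / (u √(1 + u ^ 2)) du` of the series with coefficients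
`arsinhDivCoeff`; at `x = √z` it is the hypergeometric side of the identity. -/
noncomputable def arsinhDivPrimitive (x : ℝ) : ℝ :=
  ∑' n : ℕ, arsinhDivCoeff n / (2 * n + 1) * x ^ (2 * n + 1)

lemma arsinhDivPrimitive_zero : arsinhDivPrimitive 0 = 0 := by simp [arsinhDivPrimitive]

lemma hasDerivAt_arsinhDivPrimitive {x : ℝ} (hx : |x| < 1) :
    HasDerivAt arsinhDivPrimitive (∑' n, arsinhDivCoeff n * x ^ (2 * n)) x := by
  have hc (n : ℕ) : ‖arsinhDivCoeff n / (2 * n + 1)‖ ≤ 1 := by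
    rw [norm_div, Real.norm_of_nonneg (by positivity : (0 : ℝ) ≤ 2 * n + 1)]
    exact div_le_one_of_le₀ ((norm_arsinhDivCoeff_le_one n).trans (by simp)) (by positivity)
  refine (hasDerivAt_tsum_mul_pow_of_bounded injective_two_mul_add_one hc hx).congr_deriv ?_
  refine tsum_congr fun n ↦ ?_
  rw [Nat.add_sub_cancel]
  push_cast
  field_simp

lemma hasDerivAt_arsinhDivPrimitive_sinh {t : ℝ} (ht : t ≠ 0) (h : |sinh t| < 1) :
    HasDerivAt (fun s ↦ arsinhDivPrimitive (sinh s)) (t / sinh t) t := by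
  refine ((hasDerivAt_arsinhDivPrimitive h).comp t (Real.hasDerivAt_sinh t)).congr_deriv ?_
  have hcosh : √(1 + sinh t ^ 2) = cosh t := by
    rw [← Real.cosh_arsinh, Real.arsinh_sinh]
  have hseries : (∑' n, arsinhDivCoeff n * sinh t ^ (2 * n)) * sinh t =
      t / cosh t := by
    rw [← tsum_mul_right, ← hcosh]
    simpa only [pow_succ _ (2 * _), mul_assoc, Real.arsinh_sinh] using tsum_arsinhDivCoeff_mul_pow h
  rw [eq_div_iff (Real.sinh_ne_zero.2 ht), mul_right_comm, hseries,
    div_mul_cancel₀ _ (Real.cosh_pos t).ne']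

lemma arsinhDivPrimitive_sinh {t : ℝ} (ht : 0 ≤ t) (h : sinh t < 1) :
    arsinhDivPrimitive (sinh t) = divSinhPrimitive t + π ^ 2 / 4 := by
  have hsinh : ∀ s ∈ Icc 0 t, |sinh s| < 1 := fun s hs ↦ by
    rw [abs_of_nonneg (Real.sinh_nonneg_iff.2 hs.1)]
    exact (Real.sinh_le_sinh.2 hs.2).trans_lt h
  have hcont : ContinuousOn (fun s ↦ arsinhDivPrimitive (sinh s)) (Icc 0 t) := fun s hs ↦
    ((hasDerivAt_arsinhDivPrimitive (hsinh s hs)).comp s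
      (Real.hasDerivAt_sinh s)).continuousAt.continuousWithinAt
  have hdiff := sub_eq_sub_of_hasDerivAt_Ioo ht hcont
    (continuousOn_divSinhPrimitive.mono Icc_subset_Ici_self)
    (fun s hs ↦ hasDerivAt_arsinhDivPrimitive_sinh hs.1.ne' (hsinh s (Ioo_subset_Icc_self hs)))
    (fun s hs ↦ hasDerivAt_divSinhPrimitive hs.1)
  rw [divSinhPrimitive_zero, Real.sinh_zero, arsinhDivPrimitive_zero] at hdiff
  linear_combination hdiff

lemma sqrt_mul_threeF2_eq_arsinhDivPrimitive {z : ℝ} (hz : 0 ≤ z) :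
    √z * ∑' n : ℕ, poch 1 n * poch 1 n * poch (1 / 2) n / poch (3 / 2) n ^ 2 * (-z) ^ n
        / n.factorial =
      arsinhDivPrimitive √z := by
  rw [arsinhDivPrimitive, ← tsum_mul_left]
  refine tsum_congr fun n ↦ ?_
  have hpoch := (poch_pos (a := 1 / 2) (by norm_num) n).ne'
  rw [arsinhDivCoeff, poch_one, poch_three_halves, pow_succ (√z), pow_mul (√z), Real.sq_sqrt hz,
    neg_pow z]
  field_simp

theorem threeF2_one_one_half_polylog (z : ℝ) (hz0 : 0 ≤ z) (hz1 : z < 1) :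
    Real.sqrt z * ∑' n : ℕ,
        (poch 1 n) * (poch 1 n) * (poch (1/2) n)
          / ((poch (3/2) n)^2) * (-z) ^ n / (Nat.factorial n) =
      -Li2 (1 / (Real.sqrt z + Real.sqrt (z + 1)))
        + Li2 (-(1 / (Real.sqrt z + Real.sqrt (z + 1))))
        + Real.log (Real.sqrt z + Real.sqrt (z + 1))
            * Real.log ((Real.sqrt z + Real.sqrt (z + 1) - 1)
                / (Real.sqrt z + Real.sqrt (z + 1) + 1))
        + Real.pi^2 / 4 := by
  have hsinh : Real.sinh (Real.arsinh √z) = √z := Real.sinh_arsinh _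
  have hexp : Real.exp (Real.arsinh √z) = √z + √(z + 1) := by
    rw [Real.exp_arsinh, Real.sq_sqrt hz0, add_comm 1 z]
  have hlt : √z < 1 := (Real.sqrt_lt' one_pos).2 (by rwa [one_pow])
  have hmain := arsinhDivPrimitive_sinh (Real.arsinh_nonneg_iff.2 (Real.sqrt_nonneg z))
    (hsinh.trans_lt hlt)
  rw [sqrt_mul_threeF2_eq_arsinhDivPrimitive hz0, ← hexp, one_div, ← Real.exp_neg, Real.log_exp,
    ← tanh_half_eq]
  rwa [hsinh, divSinhPrimitive] at hmain
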